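/- arXiv:math/0010259 — 2 statements merged into one kernel-verified Lean document; each statement's English description precedes it below -/
import Mathlib

section
/- (Lemma 2) The star product ⋆_λ has parity if and only if λ = 1/2; that is, the condition 'C^λ_p(φ,ψ) = (−1)^p C^λ_p(ψ,φ) for all p ≥ 0 and all φ, ψ ∈ A' holds precisely when λ = 1/2. -/
open MvPolynomial

/-- The polynomial symbol algebra `A = ℂ[u₁,…,uₙ,ξ₁,…,ξₙ]`: variables `Sum.inl i` are the
`uᵢ` and variables `Sum.inr i` are the `ξᵢ`. -/
abbrev PolA (n : ℕ) := MvPolynomial (Fin n ⊕ Fin n) ℂ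

namespace LO

/-- ξ-degree of a monomial exponent. -/
def xiDeg {n : ℕ} (d : (Fin n ⊕ Fin n) →₀ ℕ) : ℕ :=
  ∑ i : Fin n, d (Sum.inr i)

/-- `c(E)`: the operator multiplying the ξ-degree-`m` component by `c m`. -/
noncomputable def cE {n : ℕ} (c : ℕ → ℂ) (φ : PolA n) : PolA n :=
  ∑ d ∈ φ.support, monomial d (c (xiDeg d) * coeff d φ)

/-- `D = Σᵢ ∂²/∂uᵢ∂ξᵢ`. -/
noncomputable def Dop {n : ℕ} (φ : PolA n) : PolA n :=
  ∑ i : Fin n, pderiv (Sum.inl i) (pderiv (Sum.inr i) φ)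

/-- The scalar `h^λ_d(m)`. -/
noncomputable def hScal (n : ℕ) (lam : ℂ) (d m : ℕ) : ℂ :=
  (d.factorial : ℂ)⁻¹ *
    ∏ j ∈ Finset.range d,
      ((m : ℂ) + (j : ℂ) + lam * ((n : ℂ) + 1)) /
        (2 * (m : ℂ) + (j : ℂ) + (n : ℂ) + (d : ℂ))

/-- The scalar `g^λ_d(m)`. -/
noncomputable def gScal (n : ℕ) (lam : ℂ) (d m : ℕ) : ℂ :=
  (d.factorial : ℂ)⁻¹ *
    ∏ j ∈ Finset.range d,
      (-(m : ℂ) - (j : ℂ) - lam * ((n : ℂ) + 1)) /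
        (2 * (m : ℂ) + (j : ℂ) + (n : ℂ) + 1)

/-- `bh^λ_d = h^λ_d(E) ∘ D^d` (equal to the identity for `d = 0`). -/
noncomputable def bh {n : ℕ} (lam : ℂ) (d : ℕ) (φ : PolA n) : PolA n :=
  cE (hScal n lam d) (Dop^[d] φ)

/-- `bg^λ_d = g^λ_d(E) ∘ D^d` (equal to the identity for `d = 0`). -/
noncomputable def bg {n : ℕ} (lam : ℂ) (d : ℕ) (φ : PolA n) : PolA n :=
  cE (gScal n lam d) (Dop^[d] φ)

/-- `N_k(φ,ψ) = (1/k!) Σ_{α ∈ {1,…,n}^k} ∂^kφ/∂ξ_α · ∂^kψ/∂u_α`. -/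
noncomputable def Nop {n : ℕ} (k : ℕ) (φ ψ : PolA n) : PolA n :=
  (k.factorial : ℂ)⁻¹ •
    ∑ α : Fin k → Fin n,
      ((List.ofFn α).foldr (fun i acc => pderiv (Sum.inr i) acc) φ) *
      ((List.ofFn α).foldr (fun i acc => pderiv (Sum.inl i) acc) ψ)

/-- The coefficient `C^λ_p` of the Lecomte–Ovsienko star product. -/
noncomputable def C (n : ℕ) (lam : ℂ) (p : ℕ) (φ ψ : PolA n) : PolA n :=
  ∑ i ∈ Finset.range (p + 1), ∑ j ∈ Finset.range (p + 1),
    ∑ k ∈ Finset.range (p + 1), ∑ m ∈ Finset.range (p + 1),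
      if i + j + k + m = p then bg lam m (Nop k (bh lam i φ) (bh lam j ψ)) else 0

/-- The Poisson bracket `{φ,ψ}`. -/
noncomputable def pb {n : ℕ} (φ ψ : PolA n) : PolA n :=
  ∑ i : Fin n,
    (pderiv (Sum.inr i) φ * pderiv (Sum.inl i) ψ
      - pderiv (Sum.inl i) φ * pderiv (Sum.inr i) ψ)

/-- `φ ∈ A^m` (ξ-homogeneous of degree `m`; for `m < 0` this forces `φ = 0`). -/
def IsXiHomog {n : ℕ} (m : ℤ) (φ : PolA n) : Prop :=
  ∀ d ∈ φ.support, (xiDeg d : ℤ) = m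

/-- The set of spanning momentum functions of the projective `sl_{n+1}(ℝ)`-action. -/
noncomputable def momSet (n : ℕ) : Set (PolA n) :=
  (Set.range fun i : Fin n => (X (Sum.inr i) : PolA n)) ∪
  (Set.range fun ij : Fin n × Fin n =>
    (X (Sum.inl ij.1) * X (Sum.inr ij.2) : PolA n)) ∪
  (Set.range fun i : Fin n =>
    (X (Sum.inl i) * ∑ k : Fin n, X (Sum.inl k) * X (Sum.inr k) : PolA n))

/-- The span `M` of the momentum functions. -/
noncomputable def momSpan (n : ℕ) : Submodule ℂ (PolA n) := Submodule.span ℂ (momSet n)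

/-- The Weyl algebra `W` of differential operators with polynomial coefficients,
as a subalgebra of `End_ℂ(A)`. -/
noncomputable def Weyl (n : ℕ) : Subalgebra ℂ (Module.End ℂ (PolA n)) :=
  Algebra.adjoin ℂ
    ((Set.range fun i : Fin n =>
        (LinearMap.mulLeft ℂ (X (Sum.inl i)) : Module.End ℂ (PolA n))) ∪
     (Set.range fun i : Fin n =>
        (LinearMap.mulLeft ℂ (X (Sum.inr i)) : Module.End ℂ (PolA n))) ∪
     (Set.range fun v : Fin n ⊕ Fin n =>
        ((pderiv v).toLinearMap : Module.End ℂ (PolA n))))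

/-- A bilinear map `B : A × A → A` is bidifferential if it is a finite sum
`B(φ,ψ) = Σ_α A_α(φ)·B_α(ψ)` with `A_α, B_α` in the Weyl algebra. -/
def Bidiff (n : ℕ) (B : PolA n → PolA n → PolA n) : Prop :=
  ∃ (N : ℕ) (Aop Bop : Fin N → Weyl n),
    ∀ φ ψ : PolA n,
      B φ ψ = ∑ α : Fin N,
        (Aop α : Module.End ℂ (PolA n)) φ * (Bop α : Module.End ℂ (PolA n)) ψ

/-- The scalar by which `T_p = ∏_{i=1}^{⌊p/2⌋}(E'+i)` acts on `A^m`. -/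
noncomputable def TScal (n p m : ℕ) : ℂ :=
  ∏ i ∈ Finset.Icc 1 (p / 2), ((m : ℂ) + (n : ℂ) / 2 + (i : ℂ))

/-- The scalar by which `S_p = ∏_{i=1}^{⌊p/2⌋}(E'−i)` acts on `A^m`. -/
noncomputable def SScal (n p m : ℕ) : ℂ :=
  ∏ i ∈ Finset.Icc 1 (p / 2), ((m : ℂ) + (n : ℂ) / 2 - (i : ℂ))

/-- The operator `T_p`. -/
noncomputable def Tp (n p : ℕ) : PolA n → PolA n := cE (TScal n p)

/-- The operator `S_p`. -/
noncomputable def Sp (n p : ℕ) : PolA n → PolA n := cE (SScal n p)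

/-- The fiberwise Euler operator `E = Σ ξᵢ ∂/∂ξᵢ` as an endomorphism. -/
noncomputable def Elin (n : ℕ) : Module.End ℂ (PolA n) :=
  ∑ i : Fin n,
    (LinearMap.mulLeft ℂ (X (Sum.inr i)) : Module.End ℂ (PolA n)) ∘ₗ
      (pderiv (Sum.inr i)).toLinearMap

/-- `E' = E + n/2` as an endomorphism. -/
noncomputable def E'lin (n : ℕ) : Module.End ℂ (PolA n) :=
  Elin n + ((n : ℂ) / 2) • 1

/-- `D` as an endomorphism. -/
noncomputable def Dlin (n : ℕ) : Module.End ℂ (PolA n) :=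
  ∑ i : Fin n,
    ((pderiv (Sum.inl i)).toLinearMap : Module.End ℂ (PolA n)) ∘ₗ
      (pderiv (Sum.inr i)).toLinearMap

/-- `L^{(m)} = −(1/16)(ξ_m∘D − 2E'∘∂/∂u_m)∘D`. -/
noncomputable def Lop (n : ℕ) (m : Fin n) : Module.End ℂ (PolA n) :=
  (-(1 / 16 : ℂ)) •
    (((LinearMap.mulLeft ℂ (X (Sum.inr m)) : Module.End ℂ (PolA n)) ∘ₗ Dlin n
        - (2 : ℂ) • (E'lin n ∘ₗ (pderiv (Sum.inl m)).toLinearMap)) ∘ₗ Dlin n)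

end LO

/-!
With `D = ∑ᵢ ∂²/∂uᵢ∂ξᵢ`, `P = ∑ᵢ ∂/∂ξᵢ ⊗ ∂/∂uᵢ` and `μ` the multiplication of `A`, the star product
is the power series `⋆_λ = G^λ ∘ μ ∘ exp(ħP) ∘ (H^λ ⊗ H^λ)`, where `G^λ = ∑ ħᵈ g^λ_d(E) Dᵈ` and
`H^λ = ∑ ħᵈ h^λ_d(E) Dᵈ`. The Chu–Vandermonde identity gives

* `G^λ(-ħ) ∘ exp(-ħD) = G^{1-λ}(ħ)` and `exp(-ħD) ∘ H^λ(ħ) = H^{1-λ}(-ħ)`,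

while the Leibniz rule `D ∘ μ = μ ∘ (D ⊗ 1 + 1 ⊗ D + P + Q)`, with `Q` the flip of `P`, gives

* `exp(-ħD) ∘ μ ∘ exp(ħP) = μ ∘ exp(-ħQ) ∘ (exp(-ħD) ⊗ exp(-ħD))`.

Together they yield the duality `C^λ_p(φ, ψ) = (-1)ᵖ C^{1-λ}_p(ψ, φ)` for every `λ`. Hence `⋆_λ` has
parity for `λ = 1/2`, and parity forces `C^λ_1 = C^{1-λ}_1`, where `C^λ_1(uᵢ, ξᵢ) = -λ`.
-/

/-! ### Rising factorials -/

section AscPochhammer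

open Finset Polynomial

lemma ascPochhammer_eval_eq_prod_range {R : Type*} [CommSemiring R] (k : ℕ) (x : R) :
    (ascPochhammer R k).eval x = ∏ j ∈ range k, (x + j) := by
  induction k with
  | zero => simp
  | succ k ih => rw [ascPochhammer_succ_eval, ih, prod_range_succ]

lemma ascPochhammer_eval_add {R : Type*} [CommSemiring R] (i j : ℕ) (x : R) :
    (ascPochhammer R (i + j)).eval x =
      (ascPochhammer R i).eval x * (ascPochhammer R j).eval (x + i) := by
  simp [← ascPochhammer_mul]

lemma ascPochhammer_eval_neg {R : Type*} [CommRing R] (k : ℕ) (x : R) :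
    (ascPochhammer R k).eval (-x) = (-1) ^ k * (ascPochhammer R k).eval (x - k + 1) := by
  rw [ascPochhammer_eval_neg_eq_descPochhammer, descPochhammer_eval_eq_ascPochhammer]

lemma ascPochhammer_eval_ne_zero {K : Type*} [Field K] [CharZero K] (k a : ℕ) (ha : a ≠ 0) :
    (ascPochhammer K k).eval (a : K) ≠ 0 := by
  rw [← Nat.cast_ascFactorial]
  obtain ⟨b, rfl⟩ := Nat.exists_eq_succ_of_ne_zero ha
  exact_mod_cast (Nat.ascFactorial_pos b k).ne'

/-- The Chu–Vandermonde identity, multiplied out so that no rising factorial is inverted. -/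
lemma sum_choose_mul_ascPochhammer_eval {R : Type*} [CommRing R] (p : ℕ) (a c : R) :
    ∑ ij ∈ antidiagonal p, (p.choose ij.1 : R) *
        ((-1) ^ ij.1 * (ascPochhammer R ij.1).eval a * (ascPochhammer R ij.2).eval (c + ij.1)) =
      (ascPochhammer R p).eval (c - a) := by
  induction p generalizing c with
  | zero => simp
  | succ p ih =>
    have hsucc (x : R) (k : ℕ) : (ascPochhammer R (k + 1)).eval x =
        x * (ascPochhammer R k).eval (x + 1) := by
      simp [ascPochhammer_succ_left]
    rw [sum_antidiagonal_choose_succ_mul fun i j ↦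
        (-1) ^ i * (ascPochhammer R i).eval a * (ascPochhammer R j).eval (c + i),
      hsucc, sub_add_eq_add_sub, ← ih (c + 1), mul_sum, ← sum_add_distrib]
    refine sum_congr rfl fun ij hij ↦ ?_
    rw [← Nat.choose_symm_of_eq_add (mem_antidiagonal.1 hij).symm, hsucc, ascPochhammer_succ_eval,
      pow_succ, Nat.cast_succ, show c + (ij.1 + 1 : R) = c + 1 + ij.1 by ring,
      show c + ij.1 + 1 = c + 1 + ij.1 by ring]
    ring

end AscPochhammer

namespace LO

open Finset Polynomial

lemma gScal_eq_ascPochhammer (n : ℕ) (lam : ℂ) (d m : ℕ) :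
    gScal n lam d m = (-1) ^ d * (ascPochhammer ℂ d).eval (m + lam * (n + 1)) /
      (d.factorial * (ascPochhammer ℂ d).eval (2 * m + n + 1 : ℂ)) := by
  have hneg : (-1 : ℂ) ^ d = ∏ _j ∈ range d, (-1) := by simp
  rw [gScal, ascPochhammer_eval_eq_prod_range, ascPochhammer_eval_eq_prod_range, hneg,
    ← prod_mul_distrib, mul_comm (d.factorial : ℂ), ← div_div, ← prod_div_distrib, div_eq_inv_mul]
  congr! 3 <;> ring

lemma hScal_eq_ascPochhammer (n : ℕ) (lam : ℂ) (d m : ℕ) :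
    hScal n lam d m = (ascPochhammer ℂ d).eval (m + lam * (n + 1)) /
      (d.factorial * (ascPochhammer ℂ d).eval (2 * m + n + d : ℂ)) := by
  rw [hScal, ascPochhammer_eval_eq_prod_range, ascPochhammer_eval_eq_prod_range,
    mul_comm (d.factorial : ℂ), ← div_div, ← prod_div_distrib, div_eq_inv_mul]
  congr! 3 <;> ring

lemma sum_neg_one_pow_mul_gScal (n : ℕ) (lam : ℂ) (p m : ℕ) :
    ∑ ij ∈ antidiagonal p,
        (-1) ^ ij.1 * gScal n lam ij.1 m * ((-1) ^ ij.2 / (ij.2.factorial : ℂ)) =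
      gScal n (1 - lam) p m := by
  have hden (k i : ℕ) : (ascPochhammer ℂ k).eval (2 * m + n + 1 + i : ℂ) ≠ 0 := by
    exact_mod_cast ascPochhammer_eval_ne_zero (K := ℂ) k (2 * m + n + 1 + i) (by omega)
  have hden₀ (k : ℕ) : (ascPochhammer ℂ k).eval (2 * m + n + 1 : ℂ) ≠ 0 := by
    simpa using hden k 0
  have hchu := sum_choose_mul_ascPochhammer_eval p (m + lam * (n + 1) : ℂ) (2 * m + n + 1)
  rw [gScal_eq_ascPochhammer,
    show (m + (1 - lam) * (n + 1) : ℂ) = 2 * m + n + 1 - (m + lam * (n + 1)) by ring, ← hchu,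
    mul_sum, sum_div]
  refine sum_congr rfl fun ij hij ↦ ?_
  obtain rfl := mem_antidiagonal.1 hij
  have := hden ij.2 ij.1
  rw [gScal_eq_ascPochhammer, ascPochhammer_eval_add ij.1 ij.2 (2 * m + n + 1 : ℂ),
    Nat.cast_add_choose, pow_add]
  generalize (2 * m + n + 1 : ℂ) = c at *
  field_simp [hden₀, Nat.factorial_ne_zero]

lemma sum_neg_one_pow_mul_hScal (n : ℕ) (lam : ℂ) (p m : ℕ) :
    ∑ ij ∈ antidiagonal p,
        (-1) ^ ij.1 / (ij.1.factorial : ℂ) * hScal n lam ij.2 (m + ij.1) =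
      (-1) ^ p * hScal n (1 - lam) p m := by
  rcases eq_or_ne p 0 with rfl | hp
  · simp [hScal]
  have hden (k i : ℕ) : (ascPochhammer ℂ k).eval (2 * m + n + p + i : ℂ) ≠ 0 := by
    exact_mod_cast ascPochhammer_eval_ne_zero (K := ℂ) k (2 * m + n + p + i) (by omega)
  have hchu := sum_choose_mul_ascPochhammer_eval p (2 * m + n + p : ℂ) (m + lam * (n + 1))
  rw [show (m + lam * (n + 1) - (2 * m + n + p) : ℂ) = -(m + (1 - lam) * (n + 1) + p - 1) by ring,
    ascPochhammer_eval_neg, sub_right_comm, sub_add_cancel, add_sub_cancel_right] at hchu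
  rw [hScal_eq_ascPochhammer, ← mul_div_assoc, ← hchu, sum_div]
  refine sum_congr rfl fun ij hij ↦ ?_
  obtain rfl := mem_antidiagonal.1 hij
  have hden₁ := hden ij.1 0
  have hden₂ := hden ij.2 ij.1
  rw [hScal_eq_ascPochhammer, ascPochhammer_eval_add ij.1 ij.2 (2 * m + n + _ : ℂ),
    Nat.cast_add_choose]
  push_cast at hden₁ hden₂ ⊢
  rw [add_zero] at hden₁
  rw [show (2 * (m + ij.1) + n + ij.2 : ℂ) = 2 * m + n + (ij.1 + ij.2) + ij.1 by ring,
    add_right_comm (m : ℂ) ij.1]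
  generalize (2 * m + n + (ij.1 + ij.2) : ℂ) = c at *
  field_simp [Nat.factorial_ne_zero]

end LO

/-! ### Formal power series of linear maps -/

section Antidiagonal

open Finset

lemma sum_antidiagonal_antidiagonal_fst_snd_comm {M : Type*} [AddCommMonoid M]
    (F : ℕ → ℕ → ℕ → ℕ → M) (p : ℕ) :
    ∑ q ∈ antidiagonal p, ∑ a ∈ antidiagonal q.1, ∑ b ∈ antidiagonal q.2, F a.1 a.2 b.1 b.2 =
      ∑ q ∈ antidiagonal p, ∑ a ∈ antidiagonal q.1, ∑ b ∈ antidiagonal q.2, F a.1 b.1 a.2 b.2 := by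
  simp only [← sum_product', sum_sigma']
  refine sum_nbij' (fun ⟨_, (i, j), (k, l)⟩ ↦ ⟨(i + k, j + l), (i, k), (j, l)⟩)
    (fun ⟨_, (i, k), (j, l)⟩ ↦ ⟨(i + j, k + l), (i, j), (k, l)⟩) ?_ ?_ ?_ ?_ fun _ _ ↦ rfl
  all_goals
    rintro ⟨⟨_, _⟩, ⟨i, j⟩, ⟨k, l⟩⟩ h
    simp only [mem_sigma, mem_product, HasAntidiagonal.mem_antidiagonal] at h
    obtain ⟨rfl, rfl, rfl⟩ := h
    simp [add_add_add_comm]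

lemma sum_antidiagonal_antidiagonal_antidiagonal_eq_sum_range {M : Type*} [AddCommMonoid M]
    (p : ℕ) (F : ℕ → ℕ → ℕ → ℕ → M) :
    ∑ a ∈ antidiagonal p, ∑ b ∈ antidiagonal a.2, ∑ c ∈ antidiagonal b.2, F c.1 c.2 b.1 a.1 =
      ∑ i ∈ range (p + 1), ∑ j ∈ range (p + 1), ∑ k ∈ range (p + 1), ∑ m ∈ range (p + 1),
        if i + j + k + m = p then F i j k m else 0 := by
  simp only [sum_sigma', ← sum_filter]
  refine sum_nbij' (fun ⟨(m, _), (k, _), (i, j)⟩ ↦ ⟨i, j, k, m⟩)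
    (fun ⟨i, j, k, m⟩ ↦ ⟨(m, k + (i + j)), (k, i + j), (i, j)⟩) ?_ ?_ ?_ ?_ fun _ _ ↦ rfl
  · rintro ⟨⟨m, _⟩, ⟨k, _⟩, ⟨i, j⟩⟩ h
    simp only [mem_sigma, HasAntidiagonal.mem_antidiagonal, mem_filter, mem_range] at h ⊢
    omega
  · rintro ⟨i, j, k, m⟩ h
    simp only [mem_sigma, HasAntidiagonal.mem_antidiagonal, mem_filter, mem_range, and_true] at h ⊢
    omega
  · rintro ⟨⟨m, _⟩, ⟨k, _⟩, ⟨i, j⟩⟩ h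
    simp only [mem_sigma, HasAntidiagonal.mem_antidiagonal] at h
    obtain ⟨rfl, rfl, rfl⟩ := h
    rfl
  · exact fun _ _ ↦ rfl

end Antidiagonal

/-- A formal power series `∑ₖ ħᵏ fₖ` of `R`-linear maps, encoded as its sequence of coefficients. -/
abbrev FormalHom (R U V : Type*) [CommSemiring R] [AddCommMonoid U] [AddCommMonoid V]
    [Module R U] [Module R V] := ℕ → U →ₗ[R] V

namespace FormalHom

open Finset TensorProduct

section CommSemiring

variable {R U V W Z U' V' W' : Type*} [CommSemiring R]
  [AddCommMonoid U] [Module R U] [AddCommMonoid V] [Module R V]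
  [AddCommMonoid W] [Module R W] [AddCommMonoid Z] [Module R Z]
  [AddCommMonoid U'] [Module R U'] [AddCommMonoid V'] [Module R V']
  [AddCommMonoid W'] [Module R W']

/-- The constant power series with value `t`. -/
def const (t : U →ₗ[R] V) : FormalHom R U V := Pi.single 0 t

/-- Composition of power series of linear maps, i.e. their Cauchy product. -/
def comp (g : FormalHom R V W) (f : FormalHom R U V) : FormalHom R U W :=
  fun p ↦ ∑ ij ∈ antidiagonal p, g ij.1 ∘ₗ f ij.2

infixr:90 "∘ħ" => comp

/-- The tensor product of power series of linear maps over the base ring of power series in `ħ`. -/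
noncomputable def tensor (f : FormalHom R U V) (g : FormalHom R U' V') :
    FormalHom R (U ⊗[R] U') (V ⊗[R] V') :=
  fun p ↦ ∑ ij ∈ antidiagonal p, TensorProduct.map (f ij.1) (g ij.2)

lemma comp_const_apply (g : FormalHom R V W) (t : U →ₗ[R] V) (p : ℕ) :
    (g ∘ħ const t) p = g p ∘ₗ t := by
  rw [comp, sum_eq_single (p, 0)]
  · simp [const]
  · rintro ⟨i, j⟩ hij hne
    have hj : j ≠ 0 := by rintro rfl; simp_all
    simp [const, hj]
  · simp

lemma const_comp_apply (t : V →ₗ[R] W) (f : FormalHom R U V) (p : ℕ) :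
    (const t ∘ħ f) p = t ∘ₗ f p := by
  rw [comp, sum_eq_single (0, p)]
  · simp [const]
  · rintro ⟨i, j⟩ hij hne
    have hi : i ≠ 0 := by rintro rfl; simp_all
    simp [const, hi]
  · simp

lemma const_comp_const (t : V →ₗ[R] W) (s : U →ₗ[R] V) : const t ∘ħ const s = const (t ∘ₗ s) := by
  funext p
  rw [comp_const_apply]
  cases p <;> simp [const]

lemma comp_apply (g : FormalHom R V W) (f : FormalHom R U V) (p : ℕ) (x : U) :
    (g ∘ħ f) p x = ∑ ij ∈ antidiagonal p, g ij.1 (f ij.2 x) := by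
  simp [comp]

lemma tensor_apply_tmul (f : FormalHom R U V) (g : FormalHom R U' V') (p : ℕ) (x : U) (y : U') :
    tensor f g p (x ⊗ₜ y) = ∑ ij ∈ antidiagonal p, f ij.1 x ⊗ₜ[R] g ij.2 y := by
  simp [tensor]

lemma comp_assoc (h : FormalHom R W Z) (g : FormalHom R V W) (f : FormalHom R U V) :
    (h ∘ħ g) ∘ħ f = h ∘ħ g ∘ħ f := by
  funext p
  ext x
  simp only [comp_apply, map_sum, sum_sigma']
  refine sum_nbij' (fun ⟨⟨_, j⟩, ⟨k, l⟩⟩ ↦ ⟨(k, l + j), (l, j)⟩)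
    (fun ⟨⟨i, _⟩, ⟨k, l⟩⟩ ↦ ⟨(i + k, l), (i, k)⟩) ?_ ?_ ?_ ?_ fun _ _ ↦ rfl
  all_goals
    rintro ⟨⟨_, _⟩, ⟨_, _⟩⟩ hij
    simp only [mem_sigma, HasAntidiagonal.mem_antidiagonal] at hij
    obtain ⟨rfl, rfl⟩ := hij
    simp [add_assoc]

lemma tensor_comp_tensor (g : FormalHom R V W) (f : FormalHom R U V)
    (g' : FormalHom R V' W') (f' : FormalHom R U' V') :
    tensor g g' ∘ħ tensor f f' = tensor (g ∘ħ f) (g' ∘ħ f') := by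
  funext p
  refine TensorProduct.ext' fun x y ↦ ?_
  simp only [comp_apply, tensor_apply_tmul, map_sum, sum_tmul, tmul_sum]
  rw [sum_congr rfl fun q _ ↦ sum_comm,
    sum_antidiagonal_antidiagonal_fst_snd_comm fun i j k l ↦ g i (f k x) ⊗ₜ[R] g' j (f' l y)]
  exact sum_congr rfl fun q _ ↦ sum_comm

lemma tensor_comp_comm (f : FormalHom R U V) (g : FormalHom R U' V') :
    tensor f g ∘ħ const (TensorProduct.comm R U' U).toLinearMap =
      const (TensorProduct.comm R V' V).toLinearMap ∘ħ tensor g f := by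
  funext p
  rw [comp_const_apply, const_comp_apply]
  refine TensorProduct.ext' fun x y ↦ ?_
  simp only [LinearMap.comp_apply, LinearEquiv.coe_coe, TensorProduct.comm_tmul,
    tensor_apply_tmul, map_sum]
  rw [← Nat.sum_antidiagonal_swap]
  rfl

end CommSemiring

section CommRing

variable {R U V W U' V' : Type*} [CommRing R]
  [AddCommMonoid U] [Module R U] [AddCommMonoid V] [Module R V] [AddCommMonoid W] [Module R W]
  [AddCommMonoid U'] [Module R U'] [AddCommMonoid V'] [Module R V']

/-- The substitution `ħ ↦ -ħ` in a power series of linear maps. -/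
def evalNeg (f : FormalHom R U V) : FormalHom R U V := fun p ↦ (-1 : R) ^ p • f p

lemma evalNeg_const (t : U →ₗ[R] V) : evalNeg (const t) = const t := by
  funext p
  cases p <;> simp [evalNeg, const]

lemma evalNeg_comp (g : FormalHom R V W) (f : FormalHom R U V) :
    evalNeg (g ∘ħ f) = evalNeg g ∘ħ evalNeg f := by
  funext p
  simp only [evalNeg, comp, smul_sum]
  refine sum_congr rfl fun ij hij ↦ ?_
  rw [← mem_antidiagonal.1 hij, LinearMap.comp_smul, LinearMap.smul_comp, smul_smul, pow_add,
    mul_comm]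

lemma evalNeg_tensor (f : FormalHom R U V) (g : FormalHom R U' V') :
    evalNeg (tensor f g) = tensor (evalNeg f) (evalNeg g) := by
  funext p
  simp only [evalNeg, tensor, smul_sum]
  refine sum_congr rfl fun ij hij ↦ ?_
  rw [← mem_antidiagonal.1 hij, TensorProduct.map_smul_left, TensorProduct.map_smul_right,
    smul_smul, pow_add]

end CommRing

section Field

variable {K V W : Type*} [Field K] [AddCommGroup V] [Module K V] [AddCommGroup W] [Module K W]

/-- The exponential `exp (ħ T) = ∑ₖ ħᵏ Tᵏ / k!` of an endomorphism. -/
def exp (T : Module.End K V) : FormalHom K V V := fun k ↦ (k.factorial : K)⁻¹ • T ^ k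

lemma exp_neg (T : Module.End K V) : exp (-T) = evalNeg (exp T) := by
  funext k
  rw [exp, evalNeg, exp, smul_comm, neg_pow, ← neg_one_smul K, smul_pow, one_pow,
    smul_mul_assoc, one_mul]

lemma exp_comp_exp [CharZero K] {S T : Module.End K V} (h : Commute S T) :
    exp S ∘ħ exp T = exp (S + T) := by
  funext p
  rw [comp, exp, h.add_pow', smul_sum]
  refine sum_congr rfl fun ij hij ↦ ?_
  obtain rfl := mem_antidiagonal.1 hij
  rw [exp, exp, LinearMap.comp_smul, LinearMap.smul_comp, smul_smul, ← Nat.cast_smul_eq_nsmul K,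
    smul_smul, Nat.cast_add_choose, Module.End.mul_eq_comp]
  congr 1
  field_simp [Nat.factorial_ne_zero]

lemma exp_comp_const {S : Module.End K W} {T : Module.End K V} {t : V →ₗ[K] W}
    (h : S ∘ₗ t = t ∘ₗ T) : exp S ∘ħ const t = const t ∘ħ exp T := by
  funext k
  rw [comp_const_apply, const_comp_apply, exp, exp, LinearMap.smul_comp, LinearMap.comp_smul]
  congr 1
  exact Module.End.commute_pow_left_of_commute h k

lemma tensor_exp_exp [CharZero K] (S : Module.End K V) (T : Module.End K W) :
    tensor (exp S) (exp T) = exp (S.rTensor W + T.lTensor V) := by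
  rw [← exp_comp_exp]
  · funext p
    refine sum_congr rfl fun ij _ ↦ ?_
    simp only [exp, LinearMap.rTensor_pow, LinearMap.lTensor_pow, LinearMap.comp_smul,
      LinearMap.smul_comp, TensorProduct.map_smul_left, TensorProduct.map_smul_right,
      LinearMap.rTensor_comp_lTensor]
  · exact TensorProduct.ext' fun x y ↦ by simp [Module.End.mul_apply]

end Field

end FormalHom

/-! ### Contractions by commuting derivations -/

section Contraction

open TensorProduct

lemma commute_tensorProduct_map {R V W : Type*} [CommSemiring R] [AddCommMonoid V] [Module R V]
    [AddCommMonoid W] [Module R W] {f f' : Module.End R V} {g g' : Module.End R W}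
    (hf : Commute f f') (hg : Commute g g') :
    Commute (TensorProduct.map f g : Module.End R (V ⊗[R] W)) (TensorProduct.map f' g') := by
  rw [commute_iff_eq, ← TensorProduct.map_mul, ← TensorProduct.map_mul, hf, hg]

/-- The endomorphism `∑ᵢ aᵢ ⊗ bᵢ` of `V ⊗ W`; for `aᵢ = ∂/∂ξᵢ` and `bᵢ = ∂/∂uᵢ` its exponential
generates the standard-ordered product. -/
noncomputable def contraction {R V W ι : Type*} [CommSemiring R] [AddCommMonoid V] [Module R V]
    [AddCommMonoid W] [Module R W] [Fintype ι] (a : ι → Module.End R V) (b : ι → Module.End R W) :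
    Module.End R (V ⊗[R] W) :=
  ∑ i, TensorProduct.map (a i) (b i)

namespace contraction

section CommSemiring

variable {R V W ι : Type*} [CommSemiring R] [AddCommMonoid V] [Module R V] [AddCommMonoid W]
  [Module R W] [Fintype ι]

lemma apply_tmul (a : ι → Module.End R V) (b : ι → Module.End R W) (x : V) (y : W) :
    contraction a b (x ⊗ₜ y) = ∑ i, a i x ⊗ₜ[R] b i y := by
  simp [contraction]

lemma commute_map {a : ι → Module.End R V} {b : ι → Module.End R W} {f : Module.End R V}
    {g : Module.End R W} (hf : ∀ i, Commute (a i) f) (hg : ∀ i, Commute (b i) g) :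
    Commute (contraction a b) (TensorProduct.map f g) :=
  Commute.sum_left _ _ _ fun i _ ↦ commute_tensorProduct_map (hf i) (hg i)

lemma commute {a a' : ι → Module.End R V} {b b' : ι → Module.End R W}
    (ha : ∀ i j, Commute (a i) (a' j)) (hb : ∀ i j, Commute (b i) (b' j)) :
    Commute (contraction a b) (contraction a' b') :=
  Commute.sum_right _ _ _ fun j _ ↦ commute_map (ha · j) (hb · j)

lemma commute_rTensor_add_lTensor {a b : ι → Module.End R V} {f : Module.End R V}
    (ha : ∀ i, Commute (a i) f) (hb : ∀ i, Commute (b i) f) :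
    Commute (contraction a b) (f.rTensor V + f.lTensor V) :=
  (commute_map ha fun _ ↦ Commute.one_right _).add_right
    (commute_map (fun _ ↦ Commute.one_right _) hb)

lemma comp_comm (a : ι → Module.End R V) (b : ι → Module.End R W) :
    contraction b a ∘ₗ (TensorProduct.comm R V W).toLinearMap =
      (TensorProduct.comm R V W).toLinearMap ∘ₗ contraction a b :=
  TensorProduct.ext' fun x y ↦ by simp [apply_tmul]

lemma pow_apply_tmul (a : ι → Module.End R V) (b : ι → Module.End R W) (k : ℕ) (x : V) (y : W) :
    (contraction a b ^ k) (x ⊗ₜ y) = ∑ α : Fin k → ι,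
      (List.ofFn α).foldr (fun i ↦ a i) x ⊗ₜ[R] (List.ofFn α).foldr (fun i ↦ b i) y := by
  induction k with
  | zero => simp
  | succ k ih =>
    rw [pow_succ', Module.End.mul_apply, ih, ← (Fin.consEquiv fun _ ↦ ι).sum_comp,
      Fintype.sum_prod_type, map_sum, Finset.sum_comm]
    simp [apply_tmul, Fin.consEquiv, List.ofFn_succ]

end CommSemiring

end contraction

/-- The second-order operator `∑ᵢ aᵢ ∘ bᵢ` attached to two families of derivations; for
`aᵢ = ∂/∂uᵢ` and `bᵢ = ∂/∂ξᵢ` it is the divergence operator `D`. -/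
def divergenceOp {R A ι : Type*} [CommSemiring R] [CommSemiring A] [Algebra R A] [Fintype ι]
    (a b : ι → Derivation R A A) : Module.End R A :=
  ∑ i, (a i : Module.End R A) * (b i : Module.End R A)

lemma divergenceOp_comp_mul' {R A ι : Type*} [CommSemiring R] [CommSemiring A] [Algebra R A]
    [Fintype ι] (a b : ι → Derivation R A A) :
    divergenceOp a b ∘ₗ LinearMap.mul' R A = LinearMap.mul' R A ∘ₗ
      ((divergenceOp a b).rTensor A + (divergenceOp a b).lTensor A +
        contraction (a · : ι → Module.End R A) (b ·) +
          contraction (b · : ι → Module.End R A) (a ·)) := by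
  refine TensorProduct.ext' fun x y ↦ ?_
  simp only [divergenceOp, LinearMap.coe_comp, LinearMap.coe_sum, Function.comp_apply,
    LinearMap.mul'_apply, Finset.sum_apply, Module.End.mul_apply, Derivation.coeFn_coe,
    Derivation.leibniz, smul_eq_mul, map_add, mul_comm, Finset.sum_add_distrib,
    LinearMap.add_apply, LinearMap.rTensor_tmul, LinearMap.lTensor_tmul, contraction.apply_tmul,
    Finset.mul_sum, map_sum]
  abel

end Contraction

namespace FormalHom

open TensorProduct

variable {K A ι : Type*} [Field K] [CommRing A] [Algebra K A] [Fintype ι]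

/-- The normal-ordered star product `φ ⊗ ψ ↦ ∑ₖ ħᵏ/k! ∑_α (b_{α₁} ⋯ b_{αₖ} φ) (a_{α₁} ⋯ a_{αₖ} ψ)`
of two families of derivations `a` and `b`. -/
noncomputable def normalOrderedStar (a b : ι → Derivation K A A) : FormalHom K (A ⊗[K] A) A :=
  const (LinearMap.mul' K A) ∘ħ exp (contraction (b · : ι → Module.End K A) (a ·))

lemma evalNeg_normalOrderedStar_comp_comm (a b : ι → Derivation K A A) :
    evalNeg (normalOrderedStar a b) ∘ħ const (TensorProduct.comm K A A).toLinearMap =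
      const (LinearMap.mul' K A) ∘ħ exp (-contraction (a · : ι → Module.End K A) (b ·)) := by
  set P := contraction (b · : ι → Module.End K A) (a · : ι → Module.End K A)
  set Q := contraction (a · : ι → Module.End K A) (b · : ι → Module.End K A)
  have hmul : LinearMap.mul' K A ∘ₗ (TensorProduct.comm K A A).toLinearMap = LinearMap.mul' K A :=
    TensorProduct.ext' fun x y ↦ by simp [mul_comm]
  have hflip : (-P) ∘ₗ (TensorProduct.comm K A A).toLinearMap =
      (TensorProduct.comm K A A).toLinearMap ∘ₗ (-Q) := by
    rw [LinearMap.neg_comp, LinearMap.comp_neg, contraction.comp_comm]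
  rw [normalOrderedStar, evalNeg_comp, evalNeg_const, ← exp_neg, comp_assoc,
    exp_comp_const hflip, ← comp_assoc, const_comp_const, hmul]

lemma exp_neg_divergenceOp_comp_normalOrderedStar [CharZero K] {a b : ι → Derivation K A A}
    (haa : ∀ i j, Commute (a i : Module.End K A) (a j))
    (hbb : ∀ i j, Commute (b i : Module.End K A) (b j))
    (hab : ∀ i j, Commute (a i : Module.End K A) (b j)) :
    exp (-divergenceOp a b) ∘ħ normalOrderedStar a b =
      evalNeg (normalOrderedStar a b) ∘ħ const (TensorProduct.comm K A A).toLinearMap ∘ħ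
        tensor (exp (-divergenceOp a b)) (exp (-divergenceOp a b)) := by
  set D := divergenceOp a b
  set P := contraction (b · : ι → Module.End K A) (a · : ι → Module.End K A)
  set Q := contraction (a · : ι → Module.End K A) (b · : ι → Module.End K A)
  set S := D.rTensor A + D.lTensor A
  have haD (i : ι) : Commute (a i : Module.End K A) D :=
    Commute.sum_right _ _ _ fun j _ ↦ (haa i j).mul_right (hab i j)
  have hbD (i : ι) : Commute (b i : Module.End K A) D :=
    Commute.sum_right _ _ _ fun j _ ↦ (hab j i).symm.mul_right (hbb i j)
  have hPQ : Commute P Q := contraction.commute (fun i j ↦ (hab j i).symm) hab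
  have hPS : Commute P S := contraction.commute_rTensor_add_lTensor hbD haD
  have hQS : Commute Q S := contraction.commute_rTensor_add_lTensor haD hbD
  have hleibniz : (-D) ∘ₗ LinearMap.mul' K A = LinearMap.mul' K A ∘ₗ (-(S + Q + P)) := by
    rw [LinearMap.neg_comp, LinearMap.comp_neg, divergenceOp_comp_mul']
  have hS : tensor (exp (-D)) (exp (-D)) = exp (-S) := by
    rw [tensor_exp_exp, LinearMap.rTensor_neg, LinearMap.lTensor_neg, neg_add]
  calc
    exp (-D) ∘ħ normalOrderedStar a b
      = const (LinearMap.mul' K A) ∘ħ exp (-(S + Q + P)) ∘ħ exp P := by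
        rw [normalOrderedStar, ← comp_assoc, exp_comp_const hleibniz, comp_assoc]
    _ = const (LinearMap.mul' K A) ∘ħ exp (-Q + -S) := by
        rw [exp_comp_exp ((hPS.add_right hPQ).add_right (Commute.refl P)).symm.neg_left]
        congr 2
        abel
    _ = (const (LinearMap.mul' K A) ∘ħ exp (-Q)) ∘ħ tensor (exp (-D)) (exp (-D)) := by
        rw [← exp_comp_exp hQS.neg_left.neg_right, ← comp_assoc, hS]
    _ = _ := by rw [← evalNeg_normalOrderedStar_comp_comm, comp_assoc]

end FormalHom

/-! ### The Lecomte–Ovsienko star product -/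

lemma pderiv_commute {R σ : Type*} [CommSemiring R] (v w : σ) :
    Commute (pderiv (R := R) v : Module.End R (MvPolynomial σ R))
      (pderiv (R := R) w : Module.End R (MvPolynomial σ R)) := by
  refine LinearMap.ext fun φ ↦ ?_
  ext d
  rcases eq_or_ne v w with rfl | h
  · rfl
  · simp [coeff_pderiv, h, h.symm, add_right_comm, mul_right_comm]

namespace LO

open Finset FormalHom TensorProduct

variable {n : ℕ}

lemma coeff_cE (c : ℕ → ℂ) (φ : PolA n) (d : (Fin n ⊕ Fin n) →₀ ℕ) :
    coeff d (cE c φ) = c (xiDeg d) * coeff d φ := by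
  classical
  simp +contextual [cE, coeff_sum, coeff_monomial]

/-- The operator `c(E)` as a linear map. -/
noncomputable def cELin (n : ℕ) (c : ℕ → ℂ) : Module.End ℂ (PolA n) where
  toFun := cE c
  map_add' φ ψ := by ext d; simp only [coeff_cE, coeff_add, mul_add]
  map_smul' a φ := by ext d; simp [coeff_cE, mul_left_comm]

lemma coeff_cELin (c : ℕ → ℂ) (φ : PolA n) (d : (Fin n ⊕ Fin n) →₀ ℕ) :
    coeff d (cELin n c φ) = c (xiDeg d) * coeff d φ :=
  coeff_cE c φ d

lemma Dlin_pow_apply (d : ℕ) (φ : PolA n) : (Dlin n ^ d) φ = Dop^[d] φ := by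
  have hD : ⇑(Dlin n) = Dop := by
    funext ψ
    simp [Dlin, Dop]
  rw [Module.End.pow_apply, hD]

lemma Dlin_mul_cELin (c : ℕ → ℂ) :
    Dlin n * cELin n c = cELin n (fun m ↦ c (m + 1)) * Dlin n := by
  refine LinearMap.ext fun φ ↦ ?_
  ext d
  have hdeg (i : Fin n) :
      xiDeg (d + Finsupp.single (.inl i) 1 + Finsupp.single (.inr i) 1) = xiDeg d + 1 := by
    simp [xiDeg, Finsupp.single_apply, sum_add_distrib]
  simp only [Module.End.mul_apply, coeff_cELin, Dlin, LinearMap.sum_apply, LinearMap.comp_apply,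
    Derivation.coeFn_coe, coeff_sum, coeff_pderiv, mul_sum, hdeg]
  exact sum_congr rfl fun i _ ↦ by ring

lemma Dlin_pow_mul_cELin (c : ℕ → ℂ) (k : ℕ) :
    Dlin n ^ k * cELin n c = cELin n (fun m ↦ c (m + k)) * Dlin n ^ k := by
  induction k generalizing c with
  | zero => simp
  | succ k ih => rw [pow_succ, mul_assoc, Dlin_mul_cELin, ← mul_assoc, ih, mul_assoc]; ac_rfl

/-- The power series `∑ₖ ħᵏ cₖ(E) ∘ Dᵏ`. -/
noncomputable def divergenceSeries (n : ℕ) (c : ℕ → ℕ → ℂ) : FormalHom ℂ (PolA n) (PolA n) :=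
  fun k ↦ cELin n (c k) * Dlin n ^ k

lemma divergenceSeries_comp (c c' : ℕ → ℕ → ℂ) :
    divergenceSeries n c ∘ħ divergenceSeries n c' =
      divergenceSeries n fun p m ↦ ∑ ij ∈ antidiagonal p, c ij.1 m * c' ij.2 (m + ij.1) := by
  funext p
  refine LinearMap.ext fun φ ↦ ?_
  ext d
  rw [comp_apply, divergenceSeries, Module.End.mul_apply, coeff_cELin, sum_mul, coeff_sum]
  refine sum_congr rfl fun ij hij ↦ ?_
  rw [← mem_antidiagonal.1 hij, divergenceSeries, divergenceSeries, ← Module.End.mul_apply,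
    mul_assoc, ← mul_assoc (Dlin n ^ _), Dlin_pow_mul_cELin, mul_assoc, ← pow_add]
  simp only [Module.End.mul_apply, coeff_cELin, mul_assoc]

lemma evalNeg_divergenceSeries (c : ℕ → ℕ → ℂ) :
    evalNeg (divergenceSeries n c) = divergenceSeries n fun k m ↦ (-1) ^ k * c k m := by
  funext k
  refine LinearMap.ext fun φ ↦ ?_
  ext d
  simp [evalNeg, divergenceSeries, coeff_cELin, mul_assoc]

lemma exp_neg_Dlin :
    exp (-Dlin n) = divergenceSeries n fun k _ ↦ (-1) ^ k / (k.factorial : ℂ) := by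
  rw [exp_neg]
  funext k
  refine LinearMap.ext fun φ ↦ ?_
  ext d
  simp [evalNeg, FormalHom.exp, divergenceSeries, coeff_cELin, div_eq_mul_inv, mul_assoc]

lemma evalNeg_divergenceSeries_gScal_comp_exp_neg_Dlin (lam : ℂ) :
    evalNeg (divergenceSeries n (gScal n lam)) ∘ħ exp (-Dlin n) =
      divergenceSeries n (gScal n (1 - lam)) := by
  rw [evalNeg_divergenceSeries, exp_neg_Dlin, divergenceSeries_comp]
  congr 1
  funext p m
  exact sum_neg_one_pow_mul_gScal n lam p m

lemma exp_neg_Dlin_comp_divergenceSeries_hScal (lam : ℂ) :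
    exp (-Dlin n) ∘ħ divergenceSeries n (hScal n lam) =
      evalNeg (divergenceSeries n (hScal n (1 - lam))) := by
  rw [evalNeg_divergenceSeries, exp_neg_Dlin, divergenceSeries_comp]
  congr 1
  funext p m
  exact sum_neg_one_pow_mul_hScal n lam p m

/-- The standard-ordered star product `∑ₖ ħᵏ Nₖ`. -/
noncomputable def standardStar (n : ℕ) : FormalHom ℂ (PolA n ⊗[ℂ] PolA n) (PolA n) :=
  normalOrderedStar (fun i : Fin n ↦ pderiv (.inl i)) fun i ↦ pderiv (.inr i)

lemma standardStar_apply_tmul (k : ℕ) (φ ψ : PolA n) : standardStar n k (φ ⊗ₜ ψ) = Nop k φ ψ := by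
  simp [standardStar, normalOrderedStar, const_comp_apply, FormalHom.exp,
    contraction.pow_apply_tmul, Nop]

lemma exp_neg_Dlin_comp_standardStar :
    exp (-Dlin n) ∘ħ standardStar n =
      evalNeg (standardStar n) ∘ħ const (TensorProduct.comm ℂ (PolA n) (PolA n)).toLinearMap ∘ħ
        tensor (exp (-Dlin n)) (exp (-Dlin n)) :=
  exp_neg_divergenceOp_comp_normalOrderedStar (fun _ _ ↦ pderiv_commute _ _)
    (fun _ _ ↦ pderiv_commute _ _) fun _ _ ↦ pderiv_commute _ _

/-- The Lecomte–Ovsienko star product `∑ₚ ħᵖ C^λ_p`. -/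
noncomputable def starSeries (n : ℕ) (lam : ℂ) : FormalHom ℂ (PolA n ⊗[ℂ] PolA n) (PolA n) :=
  divergenceSeries n (gScal n lam) ∘ħ standardStar n ∘ħ
    tensor (divergenceSeries n (hScal n lam)) (divergenceSeries n (hScal n lam))

lemma starSeries_apply_tmul (lam : ℂ) (p : ℕ) (φ ψ : PolA n) :
    starSeries n lam p (φ ⊗ₜ ψ) = C n lam p φ ψ := by
  have hg (m : ℕ) (χ : PolA n) : divergenceSeries n (gScal n lam) m χ = bg lam m χ := by
    rw [divergenceSeries, Module.End.mul_apply, Dlin_pow_apply]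
    rfl
  have hh (m : ℕ) (χ : PolA n) : divergenceSeries n (hScal n lam) m χ = bh lam m χ := by
    rw [divergenceSeries, Module.End.mul_apply, Dlin_pow_apply]
    rfl
  simp only [C, ← hg, ← hh, ← standardStar_apply_tmul]
  rw [← sum_antidiagonal_antidiagonal_antidiagonal_eq_sum_range p fun i j k m ↦
    divergenceSeries n (gScal n lam) m (standardStar n k
      (divergenceSeries n (hScal n lam) i φ ⊗ₜ divergenceSeries n (hScal n lam) j ψ))]
  simp only [starSeries, comp_apply, tensor_apply_tmul, map_sum]

theorem starSeries_eq_evalNeg_comp_comm (lam : ℂ) :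
    starSeries n lam = evalNeg (starSeries n (1 - lam)) ∘ħ
      const (TensorProduct.comm ℂ (PolA n) (PolA n)).toLinearMap := by
  set τ := const (TensorProduct.comm ℂ (PolA n) (PolA n)).toLinearMap
  set G := divergenceSeries n (gScal n (1 - lam))
  set H := divergenceSeries n (hScal n lam)
  set H' := divergenceSeries n (hScal n (1 - lam))
  have hG : divergenceSeries n (gScal n lam) = evalNeg G ∘ħ exp (-Dlin n) := by
    simpa using (evalNeg_divergenceSeries_gScal_comp_exp_neg_Dlin (1 - lam)).symm
  have hH : exp (-Dlin n) ∘ħ H = evalNeg H' := exp_neg_Dlin_comp_divergenceSeries_hScal lam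
  calc
    starSeries n lam = evalNeg G ∘ħ (exp (-Dlin n) ∘ħ standardStar n) ∘ħ tensor H H := by
      rw [starSeries, hG, comp_assoc, comp_assoc]
    _ = evalNeg G ∘ħ evalNeg (standardStar n) ∘ħ τ ∘ħ tensor (evalNeg H') (evalNeg H') := by
      rw [exp_neg_Dlin_comp_standardStar, comp_assoc, comp_assoc, tensor_comp_tensor, hH]
    _ = evalNeg G ∘ħ evalNeg (standardStar n) ∘ħ tensor (evalNeg H') (evalNeg H') ∘ħ τ := by
      rw [tensor_comp_comm]
    _ = evalNeg (starSeries n (1 - lam)) ∘ħ τ := by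
      rw [starSeries, evalNeg_comp, evalNeg_comp, evalNeg_tensor, comp_assoc, comp_assoc]

theorem C_eq_neg_one_pow_smul_C_one_sub (lam : ℂ) (p : ℕ) (φ ψ : PolA n) :
    C n lam p φ ψ = (-1 : ℂ) ^ p • C n (1 - lam) p ψ φ := by
  rw [← starSeries_apply_tmul, ← starSeries_apply_tmul, starSeries_eq_evalNeg_comp_comm,
    comp_const_apply]
  rfl

lemma C_one_eq (lam : ℂ) (φ ψ : PolA n) :
    C n lam 1 φ ψ = bg lam 1 (φ * ψ) + ∑ i, pderiv (.inr i) φ * pderiv (.inl i) ψ +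
      φ * bh lam 1 ψ + bh lam 1 φ * ψ := by
  have hbg (χ : PolA n) : bg lam 0 χ = χ := by ext; simp [bg, coeff_cE, gScal]
  have hbh (χ : PolA n) : bh lam 0 χ = χ := by ext; simp [bh, coeff_cE, hScal]
  have hN₀ (χ χ' : PolA n) : Nop 0 χ χ' = χ * χ' := by simp [Nop]
  have hN₁ (χ χ' : PolA n) : Nop 1 χ χ' = ∑ i, pderiv (.inr i) χ * pderiv (.inl i) χ' := by
    simp [← standardStar_apply_tmul, standardStar, normalOrderedStar, const_comp_apply,
      FormalHom.exp, contraction.apply_tmul]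
  simp [C, sum_range_succ, hbg, hbh, hN₀, hN₁]

lemma Dop_X (v : Fin n ⊕ Fin n) : Dop (X v : PolA n) = 0 := by
  classical
  simp [Dop, pderiv_X, Pi.single_apply, apply_ite]

lemma Dop_X_inl_mul_X_inr (i : Fin n) : Dop (X (.inl i) * X (.inr i) : PolA n) = 1 := by
  classical
  simp [Dop, pderiv_X, Pi.single_apply, apply_ite]

lemma C_one_X_inl_X_inr (lam : ℂ) (i : Fin n) :
    C n lam 1 (X (.inl i)) (X (.inr i)) = MvPolynomial.C (-lam) := by
  classical
  have hg : gScal n lam 1 0 = -lam := by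
    simp [gScal, neg_div, n.cast_add_one_ne_zero]
  have hcE (c : ℕ → ℂ) : cE c (0 : PolA n) = 0 := by simp [cE]
  have hcE₁ (c : ℕ → ℂ) : cE c (1 : PolA n) = MvPolynomial.C (c 0) := by
    simp [cE, xiDeg]
  simp [C_one_eq, bg, bh, Dop_X, Dop_X_inl_mul_X_inr, hcE, hcE₁, hg, pderiv_X]

end LO

/-- Lemma 2: `⋆_λ` has parity iff `λ = 1/2`. -/
theorem stmt_5 (n : ℕ) (hn : 1 ≤ n) (lam : ℂ) :
    (∀ (p : ℕ) (φ ψ : PolA n),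
        LO.C n lam p φ ψ = ((-1 : ℂ) ^ p) • LO.C n lam p ψ φ) ↔ lam = 1 / 2 := by
  constructor
  · intro hparity
    let i : Fin n := ⟨0, hn⟩
    have hC : LO.C n lam 1 (X (.inl i)) (X (.inr i)) =
        LO.C n (1 - lam) 1 (X (.inl i)) (X (.inr i)) := by
      rw [hparity, LO.C_eq_neg_one_pow_smul_C_one_sub (1 - lam), sub_sub_cancel]
    rw [LO.C_one_X_inl_X_inr, LO.C_one_X_inl_X_inr, C_inj] at hC
    linear_combination (-1 / 2 : ℂ) * hC
  · rintro rfl p φ ψ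
    convert LO.C_eq_neg_one_pow_smul_C_one_sub (1 / 2) p φ ψ using 3
    norm_num
end

section
/- For every λ ∈ ℂ, every φ ∈ A^0 = ℂ[u_1,…,u_n] and every μ ∈ A^1 (an element of ξ-degree 1), one has C^λ_1(φ,μ) = λ{φ,μ} and C^λ_1(μ,φ) = (λ−1){φ,μ}; in particular φ ⋆_λ μ = φμ + λ{φ,μ}t. -/
open MvPolynomial

/-!
In `ℤ`-valued ξ-degrees, `D^d` and `N_k` lower the total degree by `d` and by `k`, so `C_p` maps
`A^a × A^b` to `A^(a + b - p)`, which is zero as soon as `p > a + b`.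

For `p = 1` everything reduces to the Leibniz rule
`D(φψ) = Dφ·ψ + φ·Dψ + N₁(φ,ψ) + N₁(ψ,φ)`. As `g₁ = -h₁`, when `φ ∈ A^0` and `ψ ∈ A^(m+1)` the
two occurrences of `φ·Dψ` in `C₁` cancel. What remains is `h₁(m)·{φ,ψ}`, plus
`N₁(ψ,φ) = -{φ,ψ}` when the arguments are exchanged; finally `h₁(0) = λ`.
-/

namespace LO

variable {n : ℕ} {a b m : ℤ} {φ ψ : PolA n}

/-- The grading of `A` by ξ-degree, as a weight on the variables. It takes values in `ℤ`, so that
an operator lowering the degree by `d` maps `A^m` to `A^(m - d)` without a case distinction. -/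
def xiWeight (n : ℕ) : Fin n ⊕ Fin n → ℤ := Sum.elim 0 1

lemma weight_xiWeight (d : (Fin n ⊕ Fin n) →₀ ℕ) :
    Finsupp.weight (xiWeight n) d = xiDeg d := by
  rw [Finsupp.weight_apply, Finsupp.sum_fintype _ _ (by simp)]
  simp [xiWeight, xiDeg]

lemma isXiHomog_iff_isWeightedHomogeneous :
    IsXiHomog m φ ↔ IsWeightedHomogeneous (xiWeight n) φ m := by
  simp only [IsXiHomog, IsWeightedHomogeneous, weight_xiWeight, mem_support_iff]

lemma isXiHomog_zero : IsXiHomog m (0 : PolA n) := by simp [IsXiHomog]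

namespace IsXiHomog

lemma eq_zero_of_neg (hφ : IsXiHomog m φ) (hm : m < 0) : φ = 0 := by
  rw [← support_eq_empty]
  refine Finset.eq_empty_of_forall_notMem fun d hd => ?_
  have := hφ d hd
  lia

lemma sum {ι : Type*} {s : Finset ι} {f : ι → PolA n} (hf : ∀ i ∈ s, IsXiHomog m (f i)) :
    IsXiHomog m (∑ i ∈ s, f i) :=
  isXiHomog_iff_isWeightedHomogeneous.2 <|
    IsWeightedHomogeneous.sum _ _ _ fun i hi => isXiHomog_iff_isWeightedHomogeneous.1 (hf i hi)

lemma smul (hφ : IsXiHomog m φ) (c : ℂ) : IsXiHomog m (c • φ) :=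
  fun d hd => hφ d (support_smul hd)

lemma mul (hφ : IsXiHomog a φ) (hψ : IsXiHomog b ψ) : IsXiHomog (a + b) (φ * ψ) := by
  rw [isXiHomog_iff_isWeightedHomogeneous] at *
  exact IsWeightedHomogeneous.mul hφ hψ

lemma pderiv_inl (hφ : IsXiHomog m φ) (i : Fin n) : IsXiHomog m (pderiv (Sum.inl i) φ) := by
  rw [isXiHomog_iff_isWeightedHomogeneous] at *
  exact hφ.pderiv (by simp [xiWeight])

lemma pderiv_inr (hφ : IsXiHomog m φ) (i : Fin n) :
    IsXiHomog (m - 1) (pderiv (Sum.inr i) φ) := by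
  rw [isXiHomog_iff_isWeightedHomogeneous] at *
  exact hφ.pderiv (by simp [xiWeight])

lemma foldr_pderiv_inl (hφ : IsXiHomog m φ) (l : List (Fin n)) :
    IsXiHomog m (l.foldr (fun i acc => pderiv (Sum.inl i) acc) φ) := by
  induction l with
  | nil => exact hφ
  | cons i l ih => exact ih.pderiv_inl i

lemma foldr_pderiv_inr (hφ : IsXiHomog m φ) (l : List (Fin n)) :
    IsXiHomog (m - l.length) (l.foldr (fun i acc => pderiv (Sum.inr i) acc) φ) := by
  induction l with
  | nil => simpa using hφ
  | cons i l ih => simpa [sub_sub] using ih.pderiv_inr i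

lemma cE_eq_smul (hφ : IsXiHomog m φ) (c : ℕ → ℂ) : LO.cE c φ = c m.toNat • φ := by
  conv_rhs => rw [φ.as_sum, Finset.smul_sum]
  refine Finset.sum_congr rfl fun d hd => ?_
  rw [← hφ d hd, Int.toNat_natCast, smul_monomial, smul_eq_mul]

lemma cE (hφ : IsXiHomog m φ) (c : ℕ → ℂ) : IsXiHomog m (LO.cE c φ) := by
  rw [hφ.cE_eq_smul]
  exact hφ.smul _

lemma Dop (hφ : IsXiHomog m φ) : IsXiHomog (m - 1) (LO.Dop φ) :=
  sum fun i _ => (hφ.pderiv_inr i).pderiv_inl i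

lemma iterate_Dop (hφ : IsXiHomog m φ) (d : ℕ) : IsXiHomog (m - d) (LO.Dop^[d] φ) := by
  induction d with
  | zero => simpa using hφ
  | succ d ih => simpa [Function.iterate_succ_apply', sub_sub] using ih.Dop

lemma bh (hφ : IsXiHomog m φ) (lam : ℂ) (d : ℕ) : IsXiHomog (m - d) (LO.bh lam d φ) :=
  (hφ.iterate_Dop d).cE _

lemma bg (hφ : IsXiHomog m φ) (lam : ℂ) (d : ℕ) : IsXiHomog (m - d) (LO.bg lam d φ) :=
  (hφ.iterate_Dop d).cE _

lemma Nop (hφ : IsXiHomog a φ) (hψ : IsXiHomog b ψ) (k : ℕ) :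
    IsXiHomog (a + b - k) (LO.Nop k φ ψ) := by
  refine (sum fun α _ => ?_).smul _
  simpa [sub_add_eq_add_sub] using
    (hφ.foldr_pderiv_inr (List.ofFn α)).mul (hψ.foldr_pderiv_inl (List.ofFn α))

lemma C (hφ : IsXiHomog a φ) (hψ : IsXiHomog b ψ) (lam : ℂ) (p : ℕ) :
    IsXiHomog (a + b - p) (LO.C n lam p φ ψ) := by
  refine sum fun i _ => sum fun j _ => sum fun k _ => sum fun l _ => ?_
  split_ifs with hp
  · convert ((hφ.bh lam i).Nop (hψ.bh lam j) k).bg lam l using 1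
    lia
  · exact isXiHomog_zero

lemma C_eq_zero (hφ : IsXiHomog a φ) (hψ : IsXiHomog b ψ) (lam : ℂ) {p : ℕ} (hp : a + b < p) :
    LO.C n lam p φ ψ = 0 :=
  (hφ.C hψ lam p).eq_zero_of_neg (sub_neg.2 hp)

end IsXiHomog

lemma cE_one (φ : PolA n) : cE (fun _ => 1) φ = φ := by
  simp [cE, ← φ.as_sum]

lemma hScal_zero (n : ℕ) (lam : ℂ) : hScal n lam 0 = fun _ => 1 := by
  ext m
  simp [hScal]

lemma gScal_zero (n : ℕ) (lam : ℂ) : gScal n lam 0 = fun _ => 1 := by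
  ext m
  simp [gScal]

lemma bh_zero (lam : ℂ) (φ : PolA n) : bh lam 0 φ = φ := by
  rw [bh, hScal_zero, cE_one, Function.iterate_zero_apply]

lemma bg_zero (lam : ℂ) (φ : PolA n) : bg lam 0 φ = φ := by
  rw [bg, gScal_zero, cE_one, Function.iterate_zero_apply]

lemma Nop_zero (φ ψ : PolA n) : Nop 0 φ ψ = φ * ψ := by
  simp [Nop]

lemma Nop_one (φ ψ : PolA n) :
    Nop 1 φ ψ = ∑ i : Fin n, pderiv (Sum.inr i) φ * pderiv (Sum.inl i) ψ := by
  simp [Nop, ← (Equiv.funUnique (Fin 1) (Fin n)).symm.sum_comp]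

lemma C_one (lam : ℂ) (φ ψ : PolA n) :
    C n lam 1 φ ψ = bg lam 1 (φ * ψ) + Nop 1 φ ψ + φ * bh lam 1 ψ + bh lam 1 φ * ψ := by
  simp [C, Finset.sum_range_succ, bg_zero, bh_zero, Nop_zero]

lemma pb_eq_Nop_one_sub (φ ψ : PolA n) : pb φ ψ = Nop 1 φ ψ - Nop 1 ψ φ := by
  simp only [pb, Nop_one, ← Finset.sum_sub_distrib, mul_comm (pderiv (Sum.inl _) φ)]

lemma Dop_mul (φ ψ : PolA n) :
    Dop (φ * ψ) = Dop φ * ψ + φ * Dop ψ + Nop 1 φ ψ + Nop 1 ψ φ := by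
  simp only [Dop, Nop_one, Finset.mul_sum, Finset.sum_mul, ← Finset.sum_add_distrib]
  refine Finset.sum_congr rfl fun i _ => ?_
  simp only [pderiv_mul, map_add]
  ring

lemma hScal_one_zero (n : ℕ) (lam : ℂ) : hScal n lam 1 0 = lam := by
  have : (n : ℂ) + 1 ≠ 0 := n.cast_add_one_ne_zero
  simp [hScal, this]

lemma gScal_one (n : ℕ) (lam : ℂ) (m : ℕ) : gScal n lam 1 m = -hScal n lam 1 m := by
  simp only [gScal, hScal, Finset.prod_range_one]
  push_cast
  ring

namespace IsXiHomog

-- For `m ≤ 0` the truncation in `(m - 1).toNat` is harmless, since then `D φ = 0`.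
lemma bh_one (hφ : IsXiHomog m φ) (lam : ℂ) :
    LO.bh lam 1 φ = hScal n lam 1 (m - 1).toNat • LO.Dop φ :=
  hφ.Dop.cE_eq_smul _

lemma bg_one (hφ : IsXiHomog m φ) (lam : ℂ) :
    LO.bg lam 1 φ = -hScal n lam 1 (m - 1).toNat • LO.Dop φ := by
  rw [← gScal_one]
  exact hφ.Dop.cE_eq_smul _

lemma bh_eq_zero (hφ : IsXiHomog m φ) (lam : ℂ) {d : ℕ} (hd : m < d) : LO.bh lam d φ = 0 :=
  (hφ.bh lam d).eq_zero_of_neg (sub_neg.2 hd)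

lemma Dop_eq_zero (hφ : IsXiHomog 0 φ) : LO.Dop φ = 0 :=
  hφ.Dop.eq_zero_of_neg (by norm_num)

lemma Nop_one_eq_zero (hφ : IsXiHomog 0 φ) (ψ : PolA n) : LO.Nop 1 φ ψ = 0 := by
  have hderiv (i : Fin n) : pderiv (Sum.inr i) φ = 0 :=
    (hφ.pderiv_inr i).eq_zero_of_neg (by norm_num)
  simp [Nop_one, hderiv]

lemma Nop_one_eq_neg_pb (hφ : IsXiHomog 0 φ) (ψ : PolA n) : LO.Nop 1 ψ φ = -pb φ ψ := by
  rw [pb_eq_Nop_one_sub, hφ.Nop_one_eq_zero, zero_sub, neg_neg]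

lemma Dop_mul_eq_sub_pb (hφ : IsXiHomog 0 φ) (ψ : PolA n) :
    LO.Dop (φ * ψ) = φ * LO.Dop ψ - pb φ ψ := by
  rw [Dop_mul, hφ.Dop_eq_zero, hφ.Nop_one_eq_zero, hφ.Nop_one_eq_neg_pb, zero_mul, zero_add,
    add_zero, sub_eq_add_neg]

lemma bg_one_mul_add_mul_bh_one (hφ : IsXiHomog 0 φ) (hψ : IsXiHomog m ψ) (lam : ℂ) :
    LO.bg lam 1 (φ * ψ) + φ * LO.bh lam 1 ψ = hScal n lam 1 (m - 1).toNat • pb φ ψ := by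
  rw [(hφ.mul hψ).bg_one, hψ.bh_one, hφ.Dop_mul_eq_sub_pb, zero_add, mul_smul_comm]
  module

lemma C_one_left (hφ : IsXiHomog 0 φ) (hψ : IsXiHomog m ψ) (lam : ℂ) :
    LO.C n lam 1 φ ψ = hScal n lam 1 (m - 1).toNat • pb φ ψ := by
  rw [C_one, hφ.bh_eq_zero lam (by norm_num), hφ.Nop_one_eq_zero, zero_mul, add_zero, add_zero,
    hφ.bg_one_mul_add_mul_bh_one hψ]

lemma C_one_right (hφ : IsXiHomog 0 φ) (hψ : IsXiHomog m ψ) (lam : ℂ) :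
    LO.C n lam 1 ψ φ = (hScal n lam 1 (m - 1).toNat - 1) • pb φ ψ := by
  rw [C_one, hφ.bh_eq_zero lam (by norm_num), hφ.Nop_one_eq_neg_pb, mul_zero, add_zero,
    mul_comm ψ φ, mul_comm _ φ, add_right_comm, hφ.bg_one_mul_add_mul_bh_one hψ]
  module

end IsXiHomog

end LO

theorem stmt_6_general {n m : ℕ} (lam : ℂ) {φ ψ : PolA n}
    (hφ : LO.IsXiHomog 0 φ) (hψ : LO.IsXiHomog (m + 1) ψ) :
    LO.C n lam 1 φ ψ = LO.hScal n lam 1 m • LO.pb φ ψ ∧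
    LO.C n lam 1 ψ φ = (LO.hScal n lam 1 m - 1) • LO.pb φ ψ ∧
    ∀ p : ℕ, m + 2 ≤ p → LO.C n lam p φ ψ = 0 := by
  refine ⟨?_, ?_, fun p hp => hφ.C_eq_zero hψ lam (by lia)⟩
  · simpa using hφ.C_one_left hψ lam
  · simpa using hφ.C_one_right hψ lam

/-- for `φ ∈ A^0` and `μ ∈ A^1`, `C^λ_1(φ,μ) = λ{φ,μ}`,
`C^λ_1(μ,φ) = (λ−1){φ,μ}`, and (in particular `φ ⋆_λ μ = φμ + λ{φ,μ}t`)
all higher coefficients vanish. -/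
theorem stmt_6 (n : ℕ) (hn : 1 ≤ n) (lam : ℂ) (φ μ : PolA n)
    (hφ : LO.IsXiHomog 0 φ) (hμ : LO.IsXiHomog 1 μ) :
    LO.C n lam 1 φ μ = lam • LO.pb φ μ ∧
    LO.C n lam 1 μ φ = (lam - 1) • LO.pb φ μ ∧
    ∀ p : ℕ, 2 ≤ p → LO.C n lam p φ μ = 0 := by
  simpa [LO.hScal_one_zero] using stmt_6_general (m := 0) lam hφ (by simpa using hμ)
end
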